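/- Let G be a simple graph on vertex set [n] and let s be an integer with 1 ≤ s < ω(G). Then the function x ↦ f_{s+1}(G,x) attains a maximum on the set S_s(G) = {x ∈ ℝ^n : x ≥ 0 and f_s(G,x) = 1}; that is, there exists y ∈ S_s(G) such that f_{s+1}(G,y) ≥ f_{s+1}(G,x) for all x ∈ S_s(G). -/

import Mathlib

open Finset

/-- `fClique G s x` is the clique polynomial `f_s(G,x) = Σ_{S an s-clique of G} Π_{i ∈ S} x_i`. -/
def fClique {n : ℕ} (G : SimpleGraph (Fin n)) [DecidableRel G.Adj] (s : ℕ)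
    (x : Fin n → ℝ) : ℝ :=
  ∑ S ∈ G.cliqueFinset s, ∏ i ∈ S, x i

/-- Partial derivative of the clique polynomial in the variable `i`. -/
def dClique {n : ℕ} (G : SimpleGraph (Fin n)) [DecidableRel G.Adj] (s : ℕ) (i : Fin n)
    (x : Fin n → ℝ) : ℝ :=
  ∑ S ∈ (G.cliqueFinset s).filter (fun S => i ∈ S), ∏ k ∈ S.erase i, x k

lemma dClique_nonneg {n : ℕ} (G : SimpleGraph (Fin n)) [DecidableRel G.Adj] (s : ℕ) (i : Fin n)
    (x : Fin n → ℝ) (hx : ∀ k, 0 ≤ x k) : 0 ≤ dClique G s i x :=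
  Finset.sum_nonneg fun _ _ => Finset.prod_nonneg fun k _ => hx k

lemma clique_erase {n : ℕ} (G : SimpleGraph (Fin n)) [DecidableRel G.Adj] {s : ℕ}
    {S : Finset (Fin n)} (hS : S ∈ G.cliqueFinset (s + 1)) {w : Fin n} (hw : w ∈ S) :
    S.erase w ∈ G.cliqueFinset s := by
  rw [SimpleGraph.mem_cliqueFinset_iff, SimpleGraph.isNClique_iff] at hS ⊢
  refine ⟨hS.1.subset (by simp), ?_⟩
  rw [Finset.card_erase_of_mem hw, hS.2]; rfl

lemma dClique_zero {n : ℕ} (G : SimpleGraph (Fin n)) [DecidableRel G.Adj] (s : ℕ) (hs : 1 ≤ s)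
    (i : Fin n) (x : Fin n → ℝ) (hx : ∀ k, 0 ≤ x k) (h : dClique G s i x = 0) :
    dClique G (s + 1) i x = 0 := by
  unfold dClique at *
  rw [Finset.sum_eq_zero_iff_of_nonneg (fun _ _ => Finset.prod_nonneg fun k _ => hx k)] at h
  apply Finset.sum_eq_zero
  intro S hS
  rw [Finset.mem_filter] at hS
  have hc : S.card = s + 1 := (SimpleGraph.mem_cliqueFinset_iff.1 hS.1).card_eq
  obtain ⟨w, hw, hwi⟩ := Finset.exists_mem_ne (by omega : 1 < S.card) i
  have h1 := h (S.erase w) (by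
    rw [Finset.mem_filter]
    exact ⟨clique_erase G hS.1 hw, Finset.mem_erase.2 ⟨hwi.symm, hS.2⟩⟩)
  have hw' : w ∈ S.erase i := Finset.mem_erase.2 ⟨hwi, hw⟩
  rw [← Finset.mul_prod_erase _ _ hw', Finset.erase_right_comm, h1, mul_zero]

lemma fClique_update {n : ℕ} (G : SimpleGraph (Fin n)) [DecidableRel G.Adj] (s : ℕ)
    (i : Fin n) (x : Fin n → ℝ) (p : ℝ) :
    fClique G s (Function.update x i p) =
      ∑ S ∈ (G.cliqueFinset s).filter (fun S => i ∉ S), ∏ k ∈ S, x k + p * dClique G s i x := by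
  unfold fClique dClique
  rw [← Finset.sum_filter_add_sum_filter_not (G.cliqueFinset s) (fun S => i ∈ S), add_comm,
    Finset.mul_sum]
  congr 1
  · apply Finset.sum_congr rfl
    intro S hS
    apply Finset.prod_congr rfl
    intro k hk
    rw [Function.update_of_ne]
    rintro rfl
    exact (Finset.mem_filter.1 hS).2 hk
  · apply Finset.sum_congr rfl
    intro S hS
    rw [← Finset.mul_prod_erase _ _ (Finset.mem_filter.1 hS).2, Function.update_self]
    congr 1
    apply Finset.prod_congr rfl
    intro k hk
    rw [Function.update_of_ne (Finset.ne_of_mem_erase hk)]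

lemma dClique_update {n : ℕ} (G : SimpleGraph (Fin n)) [DecidableRel G.Adj] (s : ℕ)
    (i j : Fin n) (hij : i ≠ j) (hadj : ¬ G.Adj i j) (x : Fin n → ℝ) (p : ℝ) :
    dClique G s i (Function.update x j p) = dClique G s i x := by
  unfold dClique
  apply Finset.sum_congr rfl
  intro S hS
  apply Finset.prod_congr rfl
  intro k hk
  rw [Function.update_of_ne]
  rintro rfl
  rw [Finset.mem_filter, SimpleGraph.mem_cliqueFinset_iff] at hS
  exact hadj (hS.1.isClique hS.2 (Finset.mem_of_mem_erase hk) hij)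

lemma fClique_shift {n : ℕ} (G : SimpleGraph (Fin n)) [DecidableRel G.Adj] (s : ℕ)
    (i j : Fin n) (hij : i ≠ j) (hadj : ¬ G.Adj i j) (x : Fin n → ℝ) (p q : ℝ) :
    fClique G s (Function.update (Function.update x i p) j q) =
      fClique G s x + (p - x i) * dClique G s i x + (q - x j) * dClique G s j x := by
  have h1 := fClique_update G s j (Function.update x i p) q
  have h2 := fClique_update G s j (Function.update x i p) (x j)
  have h3 := fClique_update G s i x p
  have h4 := fClique_update G s i x (x i)
  rw [Function.update_eq_self] at h4
  have h5 : Function.update (Function.update x i p) j (x j) = Function.update x i p := by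
    rw [Function.update_eq_iff]
    exact ⟨by rw [Function.update_of_ne hij.symm], fun _ _ => rfl⟩
  rw [h5] at h2
  rw [dClique_update G s j i hij.symm (fun h => hadj h.symm)] at h1 h2
  linarith

lemma arith {p q B C D E : ℝ} (hp : 0 ≤ p) (hq : 0 ≤ q) (hB : 0 ≤ B) (hC : 0 ≤ C)
    (hBD : B = 0 → D = 0) (hCE : C = 0 → E = 0) :
    ∃ p' q' : ℝ, 0 ≤ p' ∧ 0 ≤ q' ∧ (p' = 0 ∨ q' = 0) ∧ (p' - p) * B + (q' - q) * C = 0 ∧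
      0 ≤ (p' - p) * D + (q' - q) * E := by
  rcases hB.eq_or_lt with hB | hB
  · exact ⟨0, q, le_rfl, hq, Or.inl rfl, by simp [← hB], by simp [hBD hB.symm]⟩
  rcases hC.eq_or_lt with hC | hC
  · exact ⟨p, 0, hp, le_rfl, Or.inr rfl, by simp [← hC], by simp [hCE hC.symm]⟩
  rcases le_total (B * E) (C * D) with h | h
  · refine ⟨p + q * C / B, 0, by positivity, le_rfl, Or.inr rfl, by field_simp; ring, ?_⟩
    have : (p + q * C / B - p) * D + (0 - q) * E = q * (C * D - B * E) / B := by
      field_simp; ring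
    rw [this]
    exact div_nonneg (mul_nonneg hq (by linarith)) hB.le
  · refine ⟨0, q + p * B / C, le_rfl, by positivity, Or.inl rfl, by field_simp; ring, ?_⟩
    have : (0 - p) * D + (q + p * B / C - q) * E = p * (B * E - C * D) / C := by
      field_simp; ring
    rw [this]
    exact div_nonneg (mul_nonneg hp (by linarith)) hC.le

lemma symmetrize {n : ℕ} (G : SimpleGraph (Fin n)) [DecidableRel G.Adj] (s : ℕ) (hs : 1 ≤ s)
    (m : ℕ) : ∀ x : Fin n → ℝ, (univ.filter (fun k => x k ≠ 0)).card ≤ m → (∀ i, 0 ≤ x i) →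
      ∃ y : Fin n → ℝ, (∀ i, 0 ≤ y i) ∧ fClique G s y = fClique G s x ∧
        fClique G (s + 1) x ≤ fClique G (s + 1) y ∧
        ∀ i j, i ≠ j → ¬ G.Adj i j → y i * y j = 0 := by
  induction m with
  | zero =>
    intro x hm hx
    refine ⟨x, hx, rfl, le_rfl, fun i j _ _ => ?_⟩
    have h0 := Finset.card_eq_zero.1 (Nat.le_zero.1 hm)
    have : ¬ (x i ≠ 0) := fun h => by
      have : i ∈ univ.filter (fun k => x k ≠ 0) := by simp [h]
      rw [h0] at this; simp at this
    rw [not_not.1 this, zero_mul]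
  | succ m ih =>
    intro x hm hx
    by_cases hcl : ∀ i j, i ≠ j → ¬ G.Adj i j → x i * x j = 0
    · exact ⟨x, hx, rfl, le_rfl, hcl⟩
    push Not at hcl
    obtain ⟨i, j, hij, hadj, hne⟩ := hcl
    have hi : x i ≠ 0 := left_ne_zero_of_mul hne
    have hj : x j ≠ 0 := right_ne_zero_of_mul hne
    obtain ⟨p, q, hp, hq, hpq, he, hle⟩ := arith (hx i) (hx j) (dClique_nonneg G s i x hx)
      (dClique_nonneg G s j x hx) (dClique_zero G s hs i x hx) (dClique_zero G s hs j x hx)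
    set z := Function.update (Function.update x i p) j q with hz
    have hzi : z i = p := by rw [hz, Function.update_of_ne hij, Function.update_self]
    have hzj : z j = q := by rw [hz, Function.update_self]
    have hzk : ∀ k, k ≠ i → k ≠ j → z k = x k := fun k h1 h2 => by
      rw [hz, Function.update_of_ne h2, Function.update_of_ne h1]
    have hz0 : ∀ k, 0 ≤ z k := fun k => by
      by_cases h1 : k = i
      · rw [h1, hzi]; exact hp
      by_cases h2 : k = j
      · rw [h2, hzj]; exact hq
      rw [hzk k h1 h2]; exact hx k
    have hcard : (univ.filter (fun k => z k ≠ 0)).card ≤ m := by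
      have : (univ.filter (fun k => z k ≠ 0)) ⊂ (univ.filter (fun k => x k ≠ 0)) := by
        rw [Finset.ssubset_iff_of_subset]
        · rcases hpq with h | h
          · exact ⟨i, by simp [hi], by simp [hzi, h]⟩
          · exact ⟨j, by simp [hj], by simp [hzj, h]⟩
        · intro k hk
          simp only [Finset.mem_filter, Finset.mem_univ, true_and] at hk ⊢
          by_cases h1 : k = i
          · rwa [h1]
          by_cases h2 : k = j
          · rwa [h2]
          rwa [hzk k h1 h2] at hk
      have := Finset.card_lt_card this
      omega
    obtain ⟨y, hy0, hy1, hy2, hy3⟩ := ih z hcard hz0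
    have e1 := fClique_shift G s i j hij hadj x p q
    have e2 := fClique_shift G (s + 1) i j hij hadj x p q
    rw [← hz] at e1 e2
    exact ⟨y, hy0, by linarith, by linarith, hy3⟩

lemma fClique_smul {n : ℕ} (G : SimpleGraph (Fin n)) [DecidableRel G.Adj] (s : ℕ)
    (x : Fin n → ℝ) (t : ℝ) : fClique G s (fun k => t * x k) = t ^ s * fClique G s x := by
  unfold fClique
  rw [Finset.mul_sum]
  apply Finset.sum_congr rfl
  intro S hS
  rw [Finset.prod_mul_distrib, Finset.prod_const,
    (SimpleGraph.mem_cliqueFinset_iff.1 hS).card_eq]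

lemma prod_le_fClique {n : ℕ} (G : SimpleGraph (Fin n)) [DecidableRel G.Adj] (s : ℕ)
    (x : Fin n → ℝ) (hx : ∀ k, 0 ≤ x k) (S : Finset (Fin n)) (hS : S ∈ G.cliqueFinset s) :
    ∏ k ∈ S, x k ≤ fClique G s x :=
  Finset.single_le_sum (f := fun S => ∏ k ∈ S, x k)
    (fun _ _ => Finset.prod_nonneg fun k _ => hx k) hS

lemma exists_start {n : ℕ} (G : SimpleGraph (Fin n)) [DecidableRel G.Adj]
    (s : ℕ) (hs : 1 ≤ s) (hsw : s < G.cliqueNum) :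
    ∃ y : Fin n → ℝ, (∀ i, 0 ≤ y i) ∧ fClique G s y = 1 ∧ 0 < fClique G (s + 1) y ∧
      ∀ i j, i ≠ j → ¬ G.Adj i j → y i * y j = 0 := by
  obtain ⟨W, hW⟩ := G.exists_isNClique_cliqueNum
  obtain ⟨K, hKW, hKc⟩ := Finset.exists_subset_card_eq (by rw [hW.card_eq]; exact hsw :
    s + 1 ≤ W.card)
  have hK : K ∈ G.cliqueFinset (s + 1) := by
    rw [SimpleGraph.mem_cliqueFinset_iff, SimpleGraph.isNClique_iff]
    exact ⟨hW.isClique.subset (by exact_mod_cast hKW), hKc⟩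
  let u : Fin n → ℝ := fun k => if k ∈ K then 1 else 0
  have hu : ∀ k, 0 ≤ u k := fun k => by simp only [u]; split_ifs <;> norm_num
  have hprod : ∀ S ⊆ K, ∏ k ∈ S, u k = 1 := fun S hS =>
    Finset.prod_eq_one fun k hk => if_pos (hS hk)
  obtain ⟨w, hw⟩ := Finset.card_pos.1 (by omega : 0 < K.card)
  have h1 : 1 ≤ fClique G s u := by
    rw [← hprod _ (Finset.erase_subset w K)]
    exact prod_le_fClique G s u hu _ (clique_erase G hK hw)
  have h2 : 1 ≤ fClique G (s + 1) u := by
    rw [← hprod _ (Finset.Subset.refl K)]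
    exact prod_le_fClique G (s + 1) u hu _ hK
  set F := fClique G s u
  have hF : 0 < F⁻¹ := by positivity
  have ht : 0 < F⁻¹ ^ ((s : ℝ)⁻¹) := Real.rpow_pos_of_pos hF _
  have hts : (F⁻¹ ^ ((s : ℝ)⁻¹)) ^ s = F⁻¹ := Real.rpow_inv_natCast_pow hF.le (by omega)
  set t := F⁻¹ ^ ((s : ℝ)⁻¹)
  refine ⟨fun k => t * u k, fun k => mul_nonneg ht.le (hu k), ?_, ?_, ?_⟩
  · rw [fClique_smul, hts]
    exact inv_mul_cancel₀ (by positivity)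
  · rw [fClique_smul]
    positivity
  · intro i j hij hadj
    have : u i * u j = 0 := by
      by_cases hi : i ∈ K
      · by_cases hj : j ∈ K
        · exact absurd ((SimpleGraph.mem_cliqueFinset_iff.1 hK).isClique hi hj hij) hadj
        · simp [u, hj]
      · simp [u, hi]
    linear_combination t ^ 2 * this

lemma coord_bound {n : ℕ} (G : SimpleGraph (Fin n)) [DecidableRel G.Adj]
    (s : ℕ) (hs : 1 ≤ s) (c : ℝ) (hc : 0 < c) :
    ∃ R : ℝ, ∀ x : Fin n → ℝ, (∀ i, 0 ≤ x i) → fClique G s x = 1 →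
      (∀ i j, i ≠ j → ¬ G.Adj i j → x i * x j = 0) → c ≤ fClique G (s + 1) x →
      ∀ v, x v ≤ R := by
  set N : ℝ := (G.cliqueFinset (s + 1)).card + 1
  have hN : 0 < N := by positivity
  set δ := c / N
  have hδ : 0 < δ := by positivity
  refine ⟨1 / δ ^ (s - 1), fun x hx h1 hcl hcx v => ?_⟩
  obtain ⟨T, hT, hTδ⟩ : ∃ T ∈ G.cliqueFinset (s + 1), δ ≤ ∏ k ∈ T, x k := by
    by_contra! h
    have h3 : fClique G (s + 1) x ≤ (G.cliqueFinset (s + 1)).card • δ :=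
      Finset.sum_le_card_nsmul _ _ _ fun S hS => (h S hS).le
    rw [nsmul_eq_mul] at h3
    have h4 : N * δ = c := by simp only [δ]; field_simp
    have h5 : N * δ = (G.cliqueFinset (s + 1)).card * δ + δ := by simp only [N]; ring
    linarith
  have hTw : ∀ w ∈ T, δ ≤ x w := fun w hw => by
    rw [← Finset.mul_prod_erase _ _ hw] at hTδ
    have := prod_le_fClique G s x hx _ (clique_erase G hT hw)
    rw [h1] at this
    nlinarith [hx w]
  by_cases hv : x v = 0
  · rw [hv]; positivity
  rw [SimpleGraph.mem_cliqueFinset_iff] at hT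
  obtain ⟨U, hUT, hUc⟩ := Finset.exists_subset_card_eq
    (show s - 1 ≤ (T.erase v).card by
      have := Finset.pred_card_le_card_erase (s := T) (a := v)
      have := hT.card_eq
      omega)
  have hvU : v ∉ U := fun h => by simpa using hUT h
  have hUT' : U ⊆ T := hUT.trans (Finset.erase_subset _ _)
  have hcl2 : insert v U ∈ G.cliqueFinset s := by
    rw [SimpleGraph.mem_cliqueFinset_iff, SimpleGraph.isNClique_iff]
    constructor
    · rw [Finset.coe_insert]
      refine SimpleGraph.IsClique.insert (hT.isClique.subset (by exact_mod_cast hUT')) ?_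
      intro b hb hvb
      by_contra hadj
      have h0 := hcl v b hvb hadj
      rcases mul_eq_zero.1 h0 with h | h
      · exact hv h
      · have := hTw b (hUT' hb); linarith
    · rw [Finset.card_insert_of_notMem hvU, hUc]; omega
  have h6 := prod_le_fClique G s x hx _ hcl2
  rw [h1, Finset.prod_insert hvU] at h6
  have h7 : δ ^ (s - 1) ≤ ∏ k ∈ U, x k := by
    rw [← hUc, ← Finset.prod_const]
    exact Finset.prod_le_prod (fun _ _ => hδ.le) fun k hk => hTw k (hUT' hk)
  rw [le_div_iff₀ (by positivity)]
  exact (mul_le_mul_of_nonneg_left h7 (hx v)).trans h6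

lemma fClique_continuous {n : ℕ} (G : SimpleGraph (Fin n)) [DecidableRel G.Adj] (s : ℕ) :
    Continuous (fClique G s) := by
  unfold fClique
  fun_prop

/-- For `1 ≤ s < ω(G)`, the function `f_{s+1}(G,·)` attains a maximum on the (noncompact)
set `S_s(G) = {x : x ≥ 0, f_s(G,x) = 1}`. -/
theorem exists_max_on_constraint {n : ℕ} (G : SimpleGraph (Fin n)) [DecidableRel G.Adj]
    (s : ℕ) (hs : 1 ≤ s) (hsw : s < G.cliqueNum) :
    ∃ y : Fin n → ℝ, (∀ i, 0 ≤ y i) ∧ fClique G s y = 1 ∧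
      ∀ x : Fin n → ℝ, (∀ i, 0 ≤ x i) → fClique G s x = 1 →
        fClique G (s + 1) x ≤ fClique G (s + 1) y := by
  obtain ⟨y₀, h0, h1, hpos, hcl⟩ := exists_start G s hs hsw
  set c := fClique G (s + 1) y₀ with hc
  obtain ⟨R, hR⟩ := coord_bound G s hs c hpos
  let A : Set (Fin n → ℝ) := {x | (∀ i, 0 ≤ x i) ∧ fClique G s x = 1 ∧
    (∀ i j, i ≠ j → ¬ G.Adj i j → x i * x j = 0) ∧ c ≤ fClique G (s + 1) x}
  have hclosed : IsClosed A := by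
    have c1 : IsClosed {x : Fin n → ℝ | ∀ i, 0 ≤ x i} := by
      simp only [Set.setOf_forall]
      exact isClosed_iInter fun i => isClosed_le continuous_const (continuous_apply i)
    have c2 : IsClosed {x : Fin n → ℝ | fClique G s x = 1} :=
      isClosed_eq (fClique_continuous G s) continuous_const
    have c3 : IsClosed {x : Fin n → ℝ | ∀ i j, i ≠ j → ¬ G.Adj i j → x i * x j = 0} := by
      simp only [Set.setOf_forall]
      exact isClosed_iInter fun i => isClosed_iInter fun j => isClosed_iInter fun _ =>
        isClosed_iInter fun _ => isClosed_eq (by fun_prop) continuous_const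
    have c4 : IsClosed {x : Fin n → ℝ | c ≤ fClique G (s + 1) x} :=
      isClosed_le continuous_const (fClique_continuous G (s + 1))
    exact c1.inter (c2.inter (c3.inter c4))
  have hcomp : IsCompact A := by
    refine IsCompact.of_isClosed_subset (isCompact_Icc (a := (0 : Fin n → ℝ))
      (b := fun _ => R)) hclosed ?_
    rintro x ⟨a1, a2, a3, a4⟩
    exact ⟨a1, hR x a1 a2 a3 a4⟩
  obtain ⟨y, ⟨b1, b2, b3, b4⟩, hmax⟩ := hcomp.exists_isMaxOn ⟨y₀, h0, h1, hcl, le_rfl⟩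
    (fClique_continuous G (s + 1)).continuousOn
  refine ⟨y, b1, b2, fun x hx hx1 => ?_⟩
  obtain ⟨z, z1, z2, z3, z4⟩ := symmetrize G s hs _ x le_rfl hx
  refine z3.trans ?_
  rcases le_total c (fClique G (s + 1) z) with h | h
  · exact hmax ⟨z1, z2.trans hx1, z4, h⟩
  · exact h.trans b4
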